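/- arXiv:2209.10400 — 2 statements merged into one kernel-verified Lean document; each statement's English description precedes it below -/
import Mathlib

section
/- Let T be a finite tree rooted at r and let p ≥ 2·h(T). There exists an optimal solution 𝓘 of the Min-Immersions problem (a feasible covering minimizing the number of immersions |𝓘|) such that every leaf of every immersion I ∈ 𝓘 is a leaf of T. -/
/-!
Among the coverings with the fewest immersions, take one of least total cost. Suppose one of its
immersions `I` has a leaf `v` that is not a leaf of `T`. Then `v` has a `T`-neighbour `w` that is
not an `I`-neighbour. Since `T` is a tree, `v` precedes `w` on the path from the root to `w`, so
any immersion `J` covering `w` contains the edge `vw` (`IsImmersion.adj_of_mem`); in particular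
`J ≠ I` and `J` covers `v`. Hence `v` can be deleted from `I`
(`IsImmersion.deleteVerts_leaf`): the covering stays feasible, has no more immersions than before,
and costs strictly less, a contradiction.

The hypothesis `2 * h(T) ≤ p` makes the family of all shortest paths from the root a feasible
covering (`exists_isFeasible`), so that a minimum exists.
-/

open SimpleGraph Finset

/-- Cost of a subgraph-immersion: twice the number of its edges. -/
noncomputable def immCost {V : Type*} {G : SimpleGraph V} (I : G.Subgraph) : ℕ :=
  2 * I.edgeSet.ncard

/-- An immersion is a connected subgraph of `G` containing the root `r`. -/
def IsImmersion {V : Type*} {G : SimpleGraph V} (r : V) (I : G.Subgraph) : Prop :=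
  I.Connected ∧ r ∈ I.verts

/-- Height of the rooted tree: maximum distance from the root. -/
noncomputable def treeHeight {V : Type*} [Fintype V] (G : SimpleGraph V) (r : V) : ℕ :=
  Finset.univ.sup (fun v => G.dist r v)

/-- A leaf of the rooted tree: a vertex `v ≠ r` of degree 1. -/
def IsTreeLeaf {V : Type*} (G : SimpleGraph V) (r v : V) : Prop :=
  v ≠ r ∧ (G.neighborSet v).ncard = 1

/-- A leaf of an immersion `I`: a vertex `v ≠ r` of degree 1 in `I`. -/
def IsImmLeaf {V : Type*} {G : SimpleGraph V} (r : V) (I : G.Subgraph) (v : V) : Prop :=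
  v ≠ r ∧ (I.neighborSet v).ncard = 1

/-- A feasible covering: a finite set of immersions, each of cost at most `p`,
whose vertex sets cover all vertices. -/
def IsFeasible {V : Type*} [Fintype V] {G : SimpleGraph V} (r : V) (p : ℕ)
    (𝓘 : Finset G.Subgraph) : Prop :=
  (∀ I ∈ 𝓘, IsImmersion r I ∧ immCost I ≤ p) ∧ (∀ v : V, ∃ I ∈ 𝓘, v ∈ I.verts)

/-- Total cost of a set of immersions. -/
noncomputable def totalCost {V : Type*} {G : SimpleGraph V} (𝓘 : Finset G.Subgraph) : ℕ :=
  ∑ I ∈ 𝓘, immCost I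

/-- Optimality for the Min-Distance problem. -/
def MinDistOptimal {V : Type*} [Fintype V] {G : SimpleGraph V} (r : V) (p : ℕ)
    (𝓘 : Finset G.Subgraph) : Prop :=
  IsFeasible r p 𝓘 ∧ ∀ 𝓙 : Finset G.Subgraph, IsFeasible r p 𝓙 → totalCost 𝓘 ≤ totalCost 𝓙

/-- Makespan (maximum collective time) of an assignment `a` of immersions to `k` robots. -/
noncomputable def makespan {V : Type*} {G : SimpleGraph V} (k : ℕ)
    (𝓘 : Finset G.Subgraph) (a : G.Subgraph → Fin k) : ℕ :=
  Finset.univ.sup (fun i : Fin k => ∑ I ∈ 𝓘.filter (fun I => a I = i), immCost I)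

/-- Optimality for the Min-Time problem with `k` robots. -/
def MinTimeOptimal {V : Type*} [Fintype V] {G : SimpleGraph V} (r : V) (p k : ℕ)
    (𝓘 : Finset G.Subgraph) (a : G.Subgraph → Fin k) : Prop :=
  IsFeasible r p 𝓘 ∧ ∀ (𝓙 : Finset G.Subgraph) (b : G.Subgraph → Fin k),
    IsFeasible r p 𝓙 → makespan k 𝓘 a ≤ makespan k 𝓙 b

/-- Optimality for the Min-Immersions problem. -/
def MinImmOptimal {V : Type*} [Fintype V] {G : SimpleGraph V} (r : V) (p : ℕ)
    (𝓘 : Finset G.Subgraph) : Prop :=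
  IsFeasible r p 𝓘 ∧ ∀ 𝓙 : Finset G.Subgraph, IsFeasible r p 𝓙 → 𝓘.card ≤ 𝓙.card

theorem IsImmersion.exists_isPath {V : Type*} {G : SimpleGraph V} {r : V} {I : G.Subgraph}
    (hI : IsImmersion r I) {x : V} (hx : x ∈ I.verts) :
    ∃ q : G.Walk r x, q.IsPath ∧ q.toSubgraph ≤ I := by
  classical
  obtain ⟨q, hq⟩ := (I.connected_iff_forall_exists_walk_subgraph.1 hI.1).2 hI.2 hx
  exact ⟨q.bypass, q.bypass_isPath, Walk.toSubgraph_bypass_le_toSubgraph.trans hq⟩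

/-- If `I` reaches `v` but omits the tree edge `vw`, then `w` lies below `v` in the rooted tree, so
every immersion reaching `w` uses the edge `vw`. -/
theorem IsImmersion.adj_of_mem {V : Type*} {T : SimpleGraph V} (hT : T.IsTree) {r v w : V}
    {I J : T.Subgraph} (hI : IsImmersion r I) (hJ : IsImmersion r J) (hv : v ∈ I.verts)
    (hw : w ∈ J.verts) (hvw : T.Adj v w) (hnot : ¬ I.Adj v w) : J.Adj v w := by
  obtain ⟨q, hq, hqI⟩ := hI.exists_isPath hv
  obtain ⟨s, hs, hsJ⟩ := hJ.exists_isPath hw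
  by_cases hmem : v ∈ s.support
  · have heq := hT.isAcyclic.path_concat hq hs hvw hmem
    apply hsJ.2
    rw [Walk.adj_toSubgraph_iff_mem_edges, heq]
    simp [Walk.edges_concat]
  · have hmem' := hT.isAcyclic.mem_support_of_ne_mem_support_of_adj_of_isPath hq hs hvw hmem
    have heq := hT.isAcyclic.path_concat hs hq hvw.symm hmem'
    refine absurd (hqI.2 ?_) hnot
    rw [Walk.adj_toSubgraph_iff_mem_edges, heq]
    simp [Walk.edges_concat, Sym2.eq_swap]

theorem IsImmersion.deleteVerts_leaf {V : Type*} [Finite V] {G : SimpleGraph V} {r v : V}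
    {I : G.Subgraph} (hI : IsImmersion r I) (hv : IsImmLeaf r I v) :
    IsImmersion r (I.deleteVerts {v}) := by
  have hr : r ∈ (I.deleteVerts {v}).verts := by
    simpa using ⟨hI.2, hv.1.symm⟩
  -- An interior vertex of a path has two neighbours on it, so a path from the root that stays
  -- in `I` and does not end in `v` avoids `v`.
  have key : ∀ x ∈ (I.deleteVerts {v}).verts,
      ∃ q : G.Walk r x, q.toSubgraph ≤ I.deleteVerts {v} := by
    intro x hx
    have hx' : x ∈ I.verts ∧ x ≠ v := by simpa using hx
    obtain ⟨q, hq, hqI⟩ := hI.exists_isPath hx'.1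
    have hvq : v ∉ q.support := by
      intro hmem
      obtain ⟨i, hi, hil⟩ := Walk.mem_support_iff_exists_getVert.1 hmem
      have hi0 : i ≠ 0 := by
        rintro rfl
        exact hv.1 (by simpa using hi.symm)
      have hilt : i < q.length := by
        refine lt_of_le_of_ne hil ?_
        rintro rfl
        exact hx'.2 (by simpa using hi)
      have h2 := hq.ncard_neighborSet_toSubgraph_internal_eq_two hi0 hilt
      rw [hi] at h2
      have hle : (q.toSubgraph.neighborSet v).ncard ≤ (I.neighborSet v).ncard :=
        Set.ncard_le_ncard (fun _ h => hqI.2 h) (Set.toFinite _)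
      have := hv.2
      omega
    refine ⟨q, ?_, ?_⟩
    · intro y hy
      refine ⟨hqI.1 hy, ?_⟩
      rintro rfl
      exact hvq (q.mem_verts_toSubgraph.1 hy)
    · intro a b hab
      have ha := q.mem_verts_toSubgraph.1 hab.fst_mem
      have hb := q.mem_verts_toSubgraph.1 hab.snd_mem
      have hab' := hqI.2 hab
      refine Subgraph.deleteVerts_adj.2 ⟨hab'.fst_mem, ?_, hab'.snd_mem, ?_, hab'⟩
      · rintro rfl
        exact hvq ha
      · rintro rfl
        exact hvq hb
  refine ⟨(Subgraph.connected_iff_forall_exists_walk_subgraph _).2 ⟨⟨r, hr⟩, ?_⟩, hr⟩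
  intro x y hx hy
  obtain ⟨q, hq⟩ := key x hx
  obtain ⟨s, hs⟩ := key y hy
  refine ⟨q.reverse.append s, ?_⟩
  rw [Walk.toSubgraph_append, Walk.toSubgraph_reverse]
  exact sup_le hq hs

theorem immCost_deleteVerts_leaf_lt {V : Type*} [Finite V] {G : SimpleGraph V} {r v : V}
    {I : G.Subgraph} (hv : IsImmLeaf r I v) : immCost (I.deleteVerts {v}) < immCost I := by
  obtain ⟨u, hu⟩ := Set.ncard_eq_one.1 hv.2
  have huv : I.Adj v u := by
    have : u ∈ I.neighborSet v := by simp [hu]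
    exact this
  have hss : (I.deleteVerts {v}).edgeSet ⊂ I.edgeSet := by
    refine ⟨Subgraph.edgeSet_mono Subgraph.deleteVerts_le, fun h => ?_⟩
    have h' : (I.deleteVerts {v}).Adj v u := h (Subgraph.mem_edgeSet.2 huv)
    exact (Subgraph.deleteVerts_adj.1 h').2.1 rfl
  have := Set.ncard_lt_ncard hss (Set.toFinite _)
  unfold immCost
  omega

theorem exists_isFeasible {V : Type*} [Fintype V] {T : SimpleGraph V} {r : V} {p : ℕ}
    (hT : T.IsTree) (hp : 2 * treeHeight T r ≤ p) :
    ∃ 𝓘 : Finset T.Subgraph, IsFeasible r p 𝓘 := by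
  classical
  choose q hq using fun v => hT.connected.exists_walk_length_eq_dist r v
  refine ⟨Finset.univ.image fun v => (q v).toSubgraph, ?_, ?_⟩
  · intro I hI
    obtain ⟨v, -, rfl⟩ := Finset.mem_image.1 hI
    refine ⟨⟨(q v).toSubgraph_connected, (q v).start_mem_verts_toSubgraph⟩, ?_⟩
    have hset : (q v).toSubgraph.edgeSet = ((q v).edges.toFinset : Set (Sym2 V)) := by
      ext e
      simp
    have hcard : (q v).toSubgraph.edgeSet.ncard ≤ T.dist r v := by
      rw [hset, Set.ncard_coe_finset, ← hq v, ← Walk.length_edges]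
      exact List.toFinset_card_le _
    have hheight : T.dist r v ≤ treeHeight T r :=
      Finset.le_sup (f := fun v => T.dist r v) (Finset.mem_univ v)
    unfold immCost
    omega
  · intro v
    exact ⟨_, Finset.mem_image_of_mem _ (Finset.mem_univ v), (q v).end_mem_verts_toSubgraph⟩

/-- Pruning step: a leaf of an immersion that is not a leaf of the tree is covered by another
immersion as well, so it can be deleted. -/
theorem IsFeasible.exists_totalCost_lt {V : Type*} [Fintype V] {T : SimpleGraph V} {r v : V}
    {p : ℕ} (hT : T.IsTree) {𝓘 : Finset T.Subgraph} (h𝓘 : IsFeasible r p 𝓘) {I : T.Subgraph}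
    (hI : I ∈ 𝓘) (hv : IsImmLeaf r I v) (hv' : ¬ IsTreeLeaf T r v) :
    ∃ 𝓙 : Finset T.Subgraph,
      IsFeasible r p 𝓙 ∧ 𝓙.card ≤ 𝓘.card ∧ totalCost 𝓙 < totalCost 𝓘 := by
  classical
  obtain ⟨hIimm, hIp⟩ := h𝓘.1 I hI
  have hvI : v ∈ I.verts := by
    have hne : (I.neighborSet v).ncard ≠ 0 := by simp [hv.2]
    obtain ⟨u, hu⟩ := Set.nonempty_of_ncard_ne_zero hne
    exact I.edge_vert hu
  obtain ⟨w, hvw, hnot⟩ : ∃ w, T.Adj v w ∧ ¬ I.Adj v w := by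
    by_contra! hall
    refine hv' ⟨hv.1, ?_⟩
    rw [← hv.2]
    congr 1
    exact Set.Subset.antisymm (fun w hw => hall w hw) (I.neighborSet_subset v)
  obtain ⟨J, hJ, hwJ⟩ := h𝓘.2 w
  have hJvw : J.Adj v w := hIimm.adj_of_mem hT (h𝓘.1 J hJ).1 hvI hwJ hvw hnot
  have hJI : J ≠ I := by
    rintro rfl
    exact hnot hJvw
  have hlt := immCost_deleteVerts_leaf_lt hv
  refine ⟨insert (I.deleteVerts {v}) (𝓘.erase I), ⟨?_, ?_⟩, ?_, ?_⟩
  · intro K hK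
    rcases Finset.mem_insert.1 hK with rfl | hK
    · exact ⟨hIimm.deleteVerts_leaf hv, hlt.le.trans hIp⟩
    · exact h𝓘.1 K (Finset.mem_of_mem_erase hK)
  · intro x
    obtain ⟨K, hK, hxK⟩ := h𝓘.2 x
    by_cases hKI : K = I
    · subst hKI
      by_cases hxv : x = v
      · subst hxv
        exact ⟨J, Finset.mem_insert_of_mem (Finset.mem_erase.2 ⟨hJI, hJ⟩), hJvw.fst_mem⟩
      · exact ⟨_, Finset.mem_insert_self _ _, ⟨hxK, hxv⟩⟩
    · exact ⟨K, Finset.mem_insert_of_mem (Finset.mem_erase.2 ⟨hKI, hK⟩), hxK⟩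
  · calc (insert (I.deleteVerts {v}) (𝓘.erase I)).card ≤ (𝓘.erase I).card + 1 :=
          Finset.card_insert_le _ _
      _ = 𝓘.card := Finset.card_erase_add_one hI
  · have hsum : ∑ K ∈ 𝓘.erase I, immCost K + immCost I = totalCost 𝓘 :=
      Finset.sum_erase_add _ _ hI
    -- The pruned immersion may already belong to the covering, hence only an inequality.
    have hins : totalCost (insert (I.deleteVerts {v}) (𝓘.erase I)) ≤
        immCost (I.deleteVerts {v}) + ∑ K ∈ 𝓘.erase I, immCost K := by
      unfold totalCost
      by_cases hmem : I.deleteVerts {v} ∈ 𝓘.erase I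
      · rw [Finset.insert_eq_of_mem hmem]
        omega
      · rw [Finset.sum_insert hmem]
    omega

theorem stmt_2 {V : Type*} [Fintype V] (T : SimpleGraph V) (r : V) (p : ℕ)
    (hT : T.IsTree) (hp : 2 * treeHeight T r ≤ p) :
    ∃ 𝓘 : Finset T.Subgraph, MinImmOptimal r p 𝓘 ∧
      ∀ I ∈ 𝓘, ∀ v : V, IsImmLeaf r I v → IsTreeLeaf T r v := by
  obtain ⟨𝓞, h𝓞, h𝓞min⟩ := exists_minimalFor_of_wellFoundedLT
    (fun 𝓘 : Finset T.Subgraph => IsFeasible r p 𝓘) Finset.card (exists_isFeasible hT hp)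
  have hopt : MinImmOptimal r p 𝓞 := by
    refine ⟨h𝓞, fun 𝓙 h𝓙 => ?_⟩
    by_contra! hlt
    exact absurd (h𝓞min h𝓙 hlt.le) (not_le.2 hlt)
  obtain ⟨𝓘, h𝓘, h𝓘min⟩ := exists_minimalFor_of_wellFoundedLT
    (fun 𝓘 : Finset T.Subgraph => MinImmOptimal r p 𝓘) totalCost ⟨𝓞, hopt⟩
  refine ⟨𝓘, h𝓘, fun I hI v hv => ?_⟩
  by_contra hv'
  obtain ⟨𝓙, h𝓙, hcard, hcost⟩ := h𝓘.1.exists_totalCost_lt hT hI hv hv'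
  have h𝓙opt : MinImmOptimal r p 𝓙 := ⟨h𝓙, fun 𝓚 h𝓚 => hcard.trans (h𝓘.2 𝓚 h𝓚)⟩
  exact absurd (h𝓘min h𝓙opt hcost.le) (not_le.2 hcost)
end

section
/- Let T be a finite tree rooted at r with at least one edge, let p ≥ 2·h(T), and let k ≥ 1. There exists an optimal solution of the Min-Time problem with k robots, i.e. a feasible covering 𝓘 together with a partition of 𝓘 into k parts S_1,…,S_k minimizing max_{1≤i≤k} Σ_{I∈S_i} C(I), such that the leaf sets of the immersions of 𝓘 form a partition of the set of leaves of T, i.e. every leaf of every immersion I ∈ 𝓘 is a leaf of T and every leaf of T is a leaf of exactly one immersion of 𝓘. -/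
/-!
Start from any optimal solution `(𝓙, b)`; one exists because the root-to-vertex paths form a
feasible covering (each costs at most `2 * treeHeight T r ≤ p`) and makespans are natural numbers.
Choose for every leaf `l` of `T` one immersion `f l ∈ 𝓙` containing it, and shrink each `J` in the
range of `f` to the union `J'` of the paths from `r` to the leaves in `f ⁻¹' {J}`.

* `J'` is an immersion with `J' ≤ J`, because a connected subgraph of a tree containing `r` and `l`
  contains the path joining them (`rootPath_le_of_connected`). So no cost increases.
* The leaves of `J'` are exactly the leaves of `T` in `f ⁻¹' {J}` (`isImmLeaf_pathUnion_iff`): a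
  vertex inside a path has degree at least two. In particular `J ↦ J'` is injective on the range of
  `f`, so `J'` can inherit the robot of `J` and the makespan does not increase.
* The shrunken immersions still cover `V`, because every vertex lies on the path from `r` to some
  leaf of `T` (`exists_leaf_above`): a longest root path through it must end in a leaf.
-/

open SimpleGraph Finset

section Shrinking

variable {V : Type*} {T : SimpleGraph V} {r : V}

/-- The union of the walks `P l` from the root `r` to the vertices `l ∈ L`, as a subgraph. It is
used when every `P l` is the path from `r` to `l` in a tree. -/
def pathUnion (P : ∀ v, T.Walk r v) (L : Set V) : T.Subgraph :=
  ⨆ l ∈ L, (P l).toSubgraph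

lemma le_pathUnion (P : ∀ v, T.Walk r v) {L : Set V} {l : V} (hl : l ∈ L) :
    (P l).toSubgraph ≤ pathUnion P L :=
  le_iSup₂_of_le l hl le_rfl

lemma mem_verts_pathUnion (P : ∀ v, T.Walk r v) {L : Set V} {v : V} :
    v ∈ (pathUnion P L).verts ↔ ∃ l ∈ L, v ∈ (P l).support := by
  simp [pathUnion]

lemma pathUnion_isImmersion (P : ∀ v, T.Walk r v) {L : Set V} (hL : L.Nonempty) :
    IsImmersion r (pathUnion P L) := by
  have hr : r ∈ (pathUnion P L).verts := by
    obtain ⟨l, hl⟩ := hL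
    exact (mem_verts_pathUnion P).2 ⟨l, hl, (P l).start_mem_support⟩
  refine ⟨?_, hr⟩
  have key : ∀ u ∈ (pathUnion P L).verts, ∃ q : T.Walk r u, q.toSubgraph ≤ pathUnion P L := by
    intro u hu
    obtain ⟨l, hl, hul⟩ := (mem_verts_pathUnion P).1 hu
    obtain ⟨q, hq⟩ := ((Subgraph.connected_iff_forall_exists_walk_subgraph _).1
      (P l).toSubgraph_connected).2 (P l).start_mem_verts_toSubgraph
      ((P l).mem_verts_toSubgraph.2 hul)
    exact ⟨q, hq.trans (le_pathUnion P hl)⟩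
  rw [Subgraph.connected_iff_forall_exists_walk_subgraph]
  refine ⟨⟨r, hr⟩, fun {u v} hu hv => ?_⟩
  obtain ⟨q, hq⟩ := key u hu
  obtain ⟨q', hq'⟩ := key v hv
  exact ⟨q.reverse.append q', by simpa using ⟨hq, hq'⟩⟩

lemma rootPath_le_of_connected (hT : T.IsTree) {I : T.Subgraph} (hI : IsImmersion r I) {v : V}
    (hv : v ∈ I.verts) {q : T.Walk r v} (hq : q.IsPath) : q.toSubgraph ≤ I := by
  classical
  obtain ⟨w, hw⟩ := ((Subgraph.connected_iff_forall_exists_walk_subgraph _).1 hI.1).2 hI.2 hv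
  have : q = w.bypass := (hT.existsUnique_path r v).unique hq w.bypass_isPath
  rw [this]
  exact Walk.toSubgraph_bypass_le_toSubgraph.trans hw

/-- The path from `r` to a non-leaf `u` can be prolonged by one edge, as `u` has a neighbour other
than the last-but-one vertex of the path. -/
lemma exists_longer_path [Finite V] (hT : T.IsTree) (hE : T.edgeSet.Nonempty)
    {u : V} {q : T.Walk r u} (hq : q.IsPath) (hu : ¬ IsTreeLeaf T r u) :
    ∃ w, ∃ h : T.Adj u w, (q.concat h).IsPath := by
  have hne : (T.neighborSet u).Nonempty := by
    obtain ⟨⟨x, y⟩, hxy⟩ := hE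
    have : Nontrivial V := ⟨x, y, T.ne_of_adj hxy⟩
    exact hT.1.preconnected.exists_adj_of_nontrivial u
  suffices ∃ w, T.Adj u w ∧ w ∉ q.support by
    obtain ⟨w, h, hw⟩ := this
    exact ⟨w, h, hq.concat hw h⟩
  by_cases hur : u = r
  · subst hur
    obtain ⟨w, hw⟩ := hne
    refine ⟨w, hw, ?_⟩
    have : q = Walk.nil := by simpa using hq
    subst this
    simpa using (T.ne_of_adj hw).symm
  · have h1 : 1 < (T.neighborSet u).ncard := by
      have h0 : (T.neighborSet u).ncard ≠ 1 := fun h => hu ⟨hur, h⟩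
      have := (Set.ncard_pos).2 hne
      omega
    obtain ⟨w, hw, hne'⟩ := Set.exists_ne_of_one_lt_ncard h1 q.penultimate
    refine ⟨w, hw, fun hmem => hne' ?_⟩
    exact hT.2.eq_penultimate_of_adj_end hq hw hmem

lemma exists_leaf_above [Finite V] (hT : T.IsTree) (hE : T.edgeSet.Nonempty)
    {P : ∀ v, T.Walk r v} (hP : ∀ v, (P v).IsPath) (v : V) :
    ∃ l, IsTreeLeaf T r l ∧ v ∈ (P l).support := by
  obtain ⟨u, hu, hmax⟩ := Set.exists_max_image {u | v ∈ (P u).support} (fun u => (P u).length)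
    (Set.toFinite _) ⟨v, (P v).end_mem_support⟩
  refine ⟨u, ?_, hu⟩
  by_contra hleaf
  obtain ⟨w, h, hw⟩ := exists_longer_path hT hE (hP u) hleaf
  have hPw : P w = (P u).concat h := (hT.existsUnique_path r w).unique (hP w) hw
  have := hmax w (by simp [hPw, Walk.support_concat, show v ∈ (P u).support from hu])
  simp [hPw] at this

lemma isImmLeaf_pathUnion_iff [Finite V] {P : ∀ v, T.Walk r v} (hP : ∀ v, (P v).IsPath)
    {L : Set V} (hL : ∀ l ∈ L, IsTreeLeaf T r l) (v : V) :
    IsImmLeaf r (pathUnion P L) v ↔ v ∈ L := by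
  constructor
  · rintro ⟨hvr, hdeg⟩
    obtain ⟨x, hx⟩ := Set.nonempty_of_ncard_ne_zero (hdeg.trans_ne one_ne_zero)
    obtain ⟨l, hl, hvl⟩ := (mem_verts_pathUnion P).1 ((pathUnion P L).edge_vert hx)
    by_cases hv : v = l
    · exact hv ▸ hl
    -- Otherwise `v` is interior to the path `P l` and has two neighbours there.
    exfalso
    obtain ⟨i, rfl, hi⟩ := Walk.mem_support_iff_exists_getVert.1 hvl
    have hi0 : i ≠ 0 := by rintro rfl; simp at hvr
    have hil : i ≠ (P l).length := by rintro rfl; simp at hv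
    have h2 := (hP l).ncard_neighborSet_toSubgraph_internal_eq_two hi0 (by omega)
    have hle := Set.ncard_le_ncard
      (Subgraph.neighborSet_subset_of_subgraph (le_pathUnion P hl) ((P l).getVert i))
      (Set.toFinite _)
    omega
  · intro hv
    obtain ⟨hvr, hdeg⟩ := hL v hv
    refine ⟨hvr, le_antisymm ?_ ?_⟩
    · exact hdeg ▸ Set.ncard_le_ncard (Subgraph.neighborSet_subset _ _) (Set.toFinite _)
    · refine (Set.ncard_pos).2 ⟨(P v).penultimate, ?_⟩
      have hnil : ¬ (P v).Nil := fun h => hvr h.eq.symm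
      exact (le_pathUnion P hv).2 ((P v).toSubgraph_adj_penultimate hnil).symm

lemma immCost_mono [Finite V] {I J : T.Subgraph} (h : I ≤ J) : immCost I ≤ immCost J :=
  Nat.mul_le_mul_left 2 (Set.ncard_le_ncard (Subgraph.edgeSet_mono h) (Set.toFinite _))

lemma immCost_toSubgraph_le {v : V} (q : T.Walk r v) : immCost q.toSubgraph ≤ 2 * q.length := by
  classical
  refine Nat.mul_le_mul_left 2 ?_
  have : q.toSubgraph.edgeSet = (q.edges.toFinset : Set (Sym2 V)) := by
    ext e; simp
  rw [this, Set.ncard_coe_finset, ← q.length_edges]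
  exact q.edges.toFinset_card_le

lemma exists_feasible [Fintype V] (hT : T.IsTree) {p : ℕ} (hp : 2 * treeHeight T r ≤ p) :
    ∃ 𝓙 : Finset T.Subgraph, IsFeasible r p 𝓙 := by
  classical
  choose P hP using fun v => hT.1.exists_walk_length_eq_dist r v
  refine ⟨Finset.univ.image fun v => (P v).toSubgraph, ?_, fun v => ?_⟩
  · intro I hI
    obtain ⟨v, -, rfl⟩ := Finset.mem_image.1 hI
    refine ⟨⟨(P v).toSubgraph_connected, (P v).start_mem_verts_toSubgraph⟩, ?_⟩
    have h1 := immCost_toSubgraph_le (P v)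
    have h2 : T.dist r v ≤ treeHeight T r :=
      Finset.le_sup (f := fun v => T.dist r v) (Finset.mem_univ v)
    have h3 := hP v
    omega
  · exact ⟨_, Finset.mem_image_of_mem _ (Finset.mem_univ v), (P v).end_mem_verts_toSubgraph⟩

lemma exists_minTimeOptimal [Fintype V] (hT : T.IsTree) {p k : ℕ} (hp : 2 * treeHeight T r ≤ p)
    (hk : 1 ≤ k) :
    ∃ (𝓙 : Finset T.Subgraph) (b : T.Subgraph → Fin k), MinTimeOptimal r p k 𝓙 b := by
  obtain ⟨𝓙₀, h₀⟩ := exists_feasible hT hp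
  let S : Set (Finset T.Subgraph × (T.Subgraph → Fin k)) := {x | IsFeasible r p x.1}
  have hS : S.Nonempty := ⟨(𝓙₀, fun _ => ⟨0, hk⟩), h₀⟩
  obtain ⟨⟨𝓙, b⟩, hx, hmin⟩ :=
    WellFounded.has_min (measure fun x : Finset T.Subgraph × (T.Subgraph → Fin k) =>
      makespan k x.1 x.2).wf S hS
  exact ⟨𝓙, b, hx, fun 𝓚 c h => not_lt.1 (hmin (𝓚, c) h)⟩

/-- Replacing the immersions of a subfamily `𝓕` of `𝓙` by cheaper and distinct ones, each keeping
its robot, does not increase the makespan. -/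
lemma makespan_image_le [DecidableEq T.Subgraph] {k : ℕ} {𝓙 𝓕 : Finset T.Subgraph}
    {b a : T.Subgraph → Fin k} {s : T.Subgraph → T.Subgraph} (h𝓕 : 𝓕 ⊆ 𝓙)
    (hinj : Set.InjOn s 𝓕) (hcost : ∀ J ∈ 𝓕, immCost (s J) ≤ immCost J)
    (ha : ∀ J ∈ 𝓕, a (s J) = b J) : makespan k (𝓕.image s) a ≤ makespan k 𝓙 b := by
  refine Finset.sup_mono_fun fun i _ => ?_
  rw [Finset.sum_filter, Finset.sum_image hinj, Finset.sum_filter]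
  calc ∑ J ∈ 𝓕, (if a (s J) = i then immCost (s J) else 0)
      ≤ ∑ J ∈ 𝓕, (if b J = i then immCost J else 0) := by
        refine Finset.sum_le_sum fun J hJ => ?_
        rw [ha J hJ]
        split_ifs
        · exact hcost J hJ
        · exact le_rfl
    _ ≤ ∑ J ∈ 𝓙, (if b J = i then immCost J else 0) :=
        Finset.sum_le_sum_of_subset h𝓕

end Shrinking

theorem stmt_7 {V : Type*} [Fintype V] (T : SimpleGraph V) (r : V) (p k : ℕ)
    (hT : T.IsTree) (hE : T.edgeSet.Nonempty) (hp : 2 * treeHeight T r ≤ p)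
    (hk : 1 ≤ k) :
    ∃ (𝓘 : Finset T.Subgraph) (a : T.Subgraph → Fin k),
      MinTimeOptimal r p k 𝓘 a ∧
      (∀ I ∈ 𝓘, ∀ v : V, IsImmLeaf r I v → IsTreeLeaf T r v) ∧
      (∀ l : V, IsTreeLeaf T r l → ∃! I : T.Subgraph, I ∈ 𝓘 ∧ IsImmLeaf r I l) := by
  classical
  obtain ⟨𝓙, b, ⟨hfeas, hcov⟩, hopt⟩ := exists_minTimeOptimal hT hp hk
  choose f hf𝓙 hf using hcov
  choose P hP _ using hT.existsUnique_path r
  let L : T.Subgraph → Set V := fun J => {l | IsTreeLeaf T r l ∧ f l = J}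
  let s : T.Subgraph → T.Subgraph := fun J => pathUnion P (L J)
  let 𝓕 : Finset T.Subgraph := (Finset.univ.filter fun l => IsTreeLeaf T r l).image f
  have mem𝓕 : ∀ J, J ∈ 𝓕 ↔ (L J).Nonempty := by
    intro J
    simp [𝓕, L, Set.Nonempty]
  have h𝓕 : 𝓕 ⊆ 𝓙 := by
    intro J hJ
    obtain ⟨l, -, rfl⟩ := (mem𝓕 J).1 hJ
    exact hf𝓙 l
  have hleaf : ∀ J v, IsImmLeaf r (s J) v ↔ IsTreeLeaf T r v ∧ f v = J := fun J v =>
    isImmLeaf_pathUnion_iff hP (fun l hl => hl.1) v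
  have hle : ∀ J ∈ 𝓕, s J ≤ J := by
    intro J hJ
    refine iSup₂_le fun l hl => ?_
    exact rootPath_le_of_connected hT (hfeas J (h𝓕 hJ)).1 (hl.2 ▸ hf l) (hP l)
  have hinj : Set.InjOn s 𝓕 := by
    intro J hJ K _ hJK
    obtain ⟨l, hl⟩ := (mem𝓕 J).1 hJ
    have h1 := (hleaf J l).2 hl
    rw [hJK] at h1
    exact hl.2.symm.trans ((hleaf K l).1 h1).2
  have : Nonempty T.Subgraph := ⟨⊤⟩
  let a : T.Subgraph → Fin k := fun I => b (Function.invFunOn s 𝓕 I)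
  have ha : ∀ J ∈ 𝓕, a (s J) = b J := fun J hJ =>
    congrArg b (hinj.leftInvOn_invFunOn hJ)
  refine ⟨𝓕.image s, a, ⟨⟨?_, ?_⟩, ?_⟩, ?_, ?_⟩
  · intro I hI
    obtain ⟨J, hJ, rfl⟩ := Finset.mem_image.1 hI
    exact ⟨pathUnion_isImmersion P ((mem𝓕 J).1 hJ),
      (immCost_mono (hle J hJ)).trans (hfeas J (h𝓕 hJ)).2⟩
  · intro v
    obtain ⟨l, hl, hv⟩ := exists_leaf_above hT hE hP v
    exact ⟨s (f l), Finset.mem_image_of_mem _ ((mem𝓕 _).2 ⟨l, hl, rfl⟩),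
      (mem_verts_pathUnion P).2 ⟨l, ⟨hl, rfl⟩, hv⟩⟩
  · intro 𝓚 c h𝓚
    exact (makespan_image_le h𝓕 hinj (fun J hJ => immCost_mono (hle J hJ)) ha).trans
      (hopt 𝓚 c h𝓚)
  · intro I hI v hv
    obtain ⟨J, -, rfl⟩ := Finset.mem_image.1 hI
    exact ((hleaf J v).1 hv).1
  · intro l hl
    refine ⟨s (f l), ⟨Finset.mem_image_of_mem _ ((mem𝓕 _).2 ⟨l, hl, rfl⟩),
      (hleaf _ l).2 ⟨hl, rfl⟩⟩, ?_⟩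
    rintro I ⟨hI, hIl⟩
    obtain ⟨J, -, rfl⟩ := Finset.mem_image.1 hI
    rw [((hleaf J l).1 hIl).2]
end
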